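/- Let F : [0,1] → [0,∞) be a nondecreasing function with F(0) = 0 and lim_{t→0+} F(t)/t = α for some constant α > 0, and let δ ∈ (0,1) be fixed. Then ∫_{1/(n log n)}^{δ} F(y)/y² dy ∼ α (log n + log(log n)) as n → ∞, i.e. the ratio of the two sides tends to 1. -/

import Mathlib

open MeasureTheory Filter Set

noncomputable section

/-!
Write `F y / y ^ 2 = α / y + (F y / y - α) / y`. The first term integrates over `[ε, δ]` to
`α (log δ - log ε)`. For the second, fix `c > 0`: near `0` it is at most `c / y` in absolute value,
because `F y / y → α`, and away from `0` it is bounded since `F ≤ F 1`. Hence the integral differs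
from `α log (1 / ε)` by at most `c log (1 / ε) + K` with `K` independent of `ε`
(`integral_sub_log_bound`), i.e. by `o(log (1 / ε))`. Specialising to `ε = 1 / (n log n)`, where
`log (1 / ε) = log n + log log n → ∞`, gives the claim.
-/

/-- The pointwise bound on the error `F y / y ^ 2 - α / y`, with one constant for all of
`(0, 1]`. -/
lemma pointwise_bound (F : ℝ → ℝ) (hmono : MonotoneOn F (Set.Icc 0 1))
    (hnonneg : ∀ y ∈ Set.Icc (0 : ℝ) 1, 0 ≤ F y) (α : ℝ) (hα : 0 < α)
    (hlim : Tendsto (fun t => F t / t) (nhdsWithin 0 (Set.Ioi 0)) (nhds α))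
    (c : ℝ) (hc : 0 < c) :
    ∃ K : ℝ, 0 ≤ K ∧ ∀ y ∈ Set.Ioc (0 : ℝ) 1, |F y / y ^ 2 - α / y| ≤ c / y + K := by
  have h := Metric.tendsto_nhds.1 hlim c hc
  obtain ⟨η, hη, hη'⟩ := mem_nhdsGT_iff_exists_Ioo_subset.1 h
  have hη0 : 0 < η := hη
  have hF1 : 0 ≤ F 1 := hnonneg 1 (by simp)
  refine ⟨F 1 / η ^ 2 + α / η, by positivity, fun y hy => ?_⟩
  have hy0 : 0 < y := hy.1
  rcases lt_or_ge y η with hyη | hyη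
  · have h1 : |F y / y - α| < c := hη' ⟨hy0, hyη⟩
    have h2 : F y / y ^ 2 - α / y = (F y / y - α) / y := by field_simp
    rw [h2, abs_div, abs_of_pos hy0]
    have h3 : |F y / y - α| / y ≤ c / y := by gcongr
    have h4 : 0 ≤ F 1 / η ^ 2 + α / η := by positivity
    linarith
  · have hFy : 0 ≤ F y := hnonneg y ⟨hy0.le, hy.2⟩
    have hFy1 : F y ≤ F 1 := hmono ⟨hy0.le, hy.2⟩ (by simp) hy.2
    have h1 : F y / y ^ 2 ≤ F 1 / η ^ 2 := by gcongr
    have h2 : α / y ≤ α / η := by gcongr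
    have h3 : 0 ≤ F y / y ^ 2 := by positivity
    have h4 : 0 ≤ α / y := by positivity
    have h5 : 0 ≤ c / y := by positivity
    rw [abs_le]
    constructor <;> linarith

lemma integral_sub_log_bound (F : ℝ → ℝ) (hmono : MonotoneOn F (Set.Icc 0 1))
    (hnonneg : ∀ y ∈ Set.Icc (0 : ℝ) 1, 0 ≤ F y) (α : ℝ) (hα : 0 < α)
    (hlim : Tendsto (fun t => F t / t) (nhdsWithin 0 (Set.Ioi 0)) (nhds α))
    (δ : ℝ) (hδ : δ ∈ Set.Ioo (0 : ℝ) 1) (c : ℝ) (hc : 0 < c) :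
    ∃ K : ℝ, ∀ ε ∈ Set.Ioo (0 : ℝ) δ,
      |(∫ y in Set.Icc ε δ, F y / y ^ 2) - α * (-Real.log ε)| ≤ c * (-Real.log ε) + K := by
  obtain ⟨K, hK0, hK⟩ := pointwise_bound F hmono hnonneg α hα hlim c hc
  refine ⟨K - α * Real.log δ, fun ε hε => ?_⟩
  obtain ⟨hε0, hεδ⟩ := hε
  obtain ⟨hδ0, hδ1⟩ := hδ
  rw [integral_Icc_eq_integral_Ioc, ← intervalIntegral.integral_of_le hεδ.le]
  have hne : ∀ y ∈ uIcc ε δ, y ≠ 0 := fun y hy => by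
    rw [uIcc_of_le hεδ.le] at hy
    exact (hε0.trans_le hy.1).ne'
  have hiF : IntervalIntegrable (fun y => F y / y ^ 2) volume ε δ := by
    have h1 : IntervalIntegrable F volume ε δ := by
      apply MonotoneOn.intervalIntegrable
      rw [uIcc_of_le hεδ.le]
      exact hmono.mono (Icc_subset_Icc hε0.le hδ1.le)
    have h2 : ContinuousOn (fun y : ℝ => (y ^ 2)⁻¹) (uIcc ε δ) :=
      ContinuousOn.inv₀ (by fun_prop) fun y hy => pow_ne_zero 2 (hne y hy)
    simpa only [div_eq_mul_inv] using h1.mul_continuousOn h2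
  have hi (a : ℝ) : IntervalIntegrable (fun y => a / y) volume ε δ :=
    (continuousOn_const.div continuousOn_id hne).intervalIntegrable
  have hint (a : ℝ) : ∫ y in ε..δ, a / y = a * (Real.log δ - Real.log ε) := by
    simp only [div_eq_mul_inv]
    rw [intervalIntegral.integral_const_mul, integral_inv_of_pos hε0 hδ0,
      Real.log_div hδ0.ne' hε0.ne']
  have hb := intervalIntegral.norm_integral_le_of_norm_le (μ := volume)
    (f := fun y => F y / y ^ 2 - α / y) (g := fun y => c / y + K) hεδ.le
    (Eventually.of_forall fun y hy => hK y ⟨hε0.trans hy.1, hy.2.trans hδ1.le⟩)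
    ((hi c).add intervalIntegrable_const)
  rw [intervalIntegral.integral_sub hiF (hi α),
    intervalIntegral.integral_add (hi c) intervalIntegrable_const, hint, hint,
    intervalIntegral.integral_const, Real.norm_eq_abs, smul_eq_mul, abs_le] at hb
  have hl : Real.log δ < 0 := Real.log_neg hδ0 hδ1
  have h1 : (δ - ε) * K ≤ K := mul_le_of_le_one_left hK0 (by linarith)
  have h2 : c * Real.log δ < 0 := mul_neg_of_pos_of_neg hc hl
  have h3 : α * Real.log δ < 0 := mul_neg_of_pos_of_neg hα hl
  rw [abs_le]
  constructor <;> linarith [hb.1, hb.2]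

/-- if `F : [0,1] → [0,∞)` is nondecreasing with `F(0) = 0` and
`lim_{t→0⁺} F(t)/t = α > 0`, and `δ ∈ (0,1)` is fixed, then
`∫_{1/(n log n)}^δ F(y)/y² dy ∼ α (log n + log log n)` as `n → ∞`. -/
theorem stmt16 (F : ℝ → ℝ) (hmono : MonotoneOn F (Set.Icc 0 1))
    (hnonneg : ∀ y ∈ Set.Icc (0 : ℝ) 1, 0 ≤ F y) (hF0 : F 0 = 0)
    (α : ℝ) (hα : 0 < α)
    (hlim : Tendsto (fun t => F t / t) (nhdsWithin 0 (Set.Ioi 0)) (nhds α))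
    (δ : ℝ) (hδ : δ ∈ Set.Ioo (0 : ℝ) 1) :
    Tendsto (fun n : ℕ =>
        (∫ y in Set.Icc (1 / ((n : ℝ) * Real.log n)) δ, F y / y ^ 2)
          / (α * (Real.log n + Real.log (Real.log n))))
      atTop (nhds 1) := by
  have hn : Tendsto (fun n : ℕ => (n : ℝ)) atTop atTop := tendsto_natCast_atTop_atTop
  have hlog := Real.tendsto_log_atTop.comp hn
  have hL := hlog.atTop_add_atTop (Real.tendsto_log_atTop.comp hlog)
  have hε := tendsto_inv_atTop_zero.comp (hn.atTop_mul_atTop₀ hlog)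
  rw [Metric.tendsto_nhds]
  intro c hc
  -- With `c * α / 2` in the bound, the relative error is at most `c / 2 + K / (α * L)`.
  obtain ⟨K, hK⟩ := integral_sub_log_bound F hmono hnonneg α hα hlim δ hδ (c * α / 2)
    (by positivity)
  filter_upwards [hn.eventually_gt_atTop 0, hlog.eventually_gt_atTop 0,
    hL.eventually_gt_atTop 0, hL.eventually_gt_atTop (2 * K / (c * α)),
    hε.eventually_lt_const hδ.1] with n h0 h1 h2 h3 h4
  simp only [Function.comp_apply] at h1 h2 h3 h4
  have hb := hK (1 / ((n : ℝ) * Real.log n)) ⟨by positivity, by rwa [one_div]⟩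
  rw [one_div, Real.log_inv, neg_neg, Real.log_mul h0.ne' h1.ne', ← one_div] at hb
  set L := Real.log n + Real.log (Real.log n)
  have hαL : 0 < α * L := by positivity
  rw [div_lt_iff₀ (by positivity)] at h3
  rw [Real.dist_eq, div_sub_one hαL.ne', abs_div, abs_of_pos hαL, div_lt_iff₀ hαL]
  linarith
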